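/- arXiv:1610.05925 — 7 statements merged into one kernel-verified Lean document; each statement's English description precedes it below -/
import Mathlib

section
/- Let K = σ·I_N + M B Mᵀ with M = Diag(√p)·Φ. If σ ∈ [0,1], B is positive semidefinite, and (1−σ)·Σ⁻¹ − B is positive semidefinite (where Σ = Φᵀ Diag(p) Φ is assumed positive definite), then 0 ⪯ K ⪯ I_N, i.e., both K and I_N − K are positive semidefinite, so K is a valid DPP marginal kernel. -/
open Matrix

/-- If `K = σ•I + M B Mᵀ` with `M = Diag(√p)·Φ`, `σ ∈ [0,1]`,
`B ⪰ 0` and `(1-σ)·Σ⁻¹ - B ⪰ 0` (with `Σ = Φᵀ Diag(p) Φ` positive definite),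
then `0 ⪯ K ⪯ I`. -/
theorem stmt0 {ι : Type*} [Fintype ι] [DecidableEq ι] {V : ℕ}
    (Φ : Matrix ι (Fin V) ℝ) (p : ι → ℝ) (hp : ∀ x, 0 ≤ p x)
    (M : Matrix ι (Fin V) ℝ)
    (hM : M = Matrix.diagonal (fun x => Real.sqrt (p x)) * Φ)
    (S : Matrix (Fin V) (Fin V) ℝ) (hS : S = Φᵀ * Matrix.diagonal p * Φ)
    (hSpd : S.PosDef)
    (σ : ℝ) (hσ0 : 0 ≤ σ) (hσ1 : σ ≤ 1)
    (B : Matrix (Fin V) (Fin V) ℝ) (hB : B.PosSemidef)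
    (hBS : ((1 - σ) • S⁻¹ - B).PosSemidef)
    (K : Matrix ι ι ℝ) (hK : K = σ • (1 : Matrix ι ι ℝ) + M * B * Mᵀ) :
    K.PosSemidef ∧ ((1 : Matrix ι ι ℝ) - K).PosSemidef := by
  have hSM : S = Mᵀ * M := by
    have hd : Matrix.diagonal p = Matrix.diagonal (fun x => Real.sqrt (p x)) *
        Matrix.diagonal (fun x => Real.sqrt (p x)) := by
      rw [Matrix.diagonal_mul_diagonal]
      congr 1
      funext x
      exact (Real.mul_self_sqrt (hp x)).symm
    rw [hS, hM, hd, Matrix.transpose_mul, Matrix.diagonal_transpose]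
    simp only [Matrix.mul_assoc]
  have hdet : IsUnit S.det := (Matrix.isUnit_iff_isUnit_det S).1 hSpd.isUnit
  have hST : Sᵀ = S := by rw [hSM, Matrix.transpose_mul, Matrix.transpose_transpose]
  have hPT : (M * S⁻¹ * Mᵀ)ᵀ = M * S⁻¹ * Mᵀ := by
    rw [Matrix.transpose_mul, Matrix.transpose_mul, Matrix.transpose_transpose,
      Matrix.transpose_nonsing_inv, hST, Matrix.mul_assoc]
  have hPP : (M * S⁻¹ * Mᵀ) * (M * S⁻¹ * Mᵀ) = M * S⁻¹ * Mᵀ := by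
    calc (M * S⁻¹ * Mᵀ) * (M * S⁻¹ * Mᵀ) = M * (S⁻¹ * (Mᵀ * M)) * (S⁻¹ * Mᵀ) := by
          simp only [Matrix.mul_assoc]
      _ = M * S⁻¹ * Mᵀ := by
          rw [← hSM, Matrix.nonsing_inv_mul _ hdet, Matrix.mul_one, Matrix.mul_assoc]
  have hQ : (1 - M * S⁻¹ * Mᵀ).PosSemidef := by
    have h := Matrix.posSemidef_self_mul_conjTranspose (1 - M * S⁻¹ * Mᵀ)
    rw [Matrix.conjTranspose_eq_transpose_of_trivial, Matrix.transpose_sub, hPT,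
      Matrix.transpose_one, Matrix.mul_sub, Matrix.sub_mul, Matrix.sub_mul, hPP] at h
    simpa using h
  have h1 := hB.mul_mul_conjTranspose_same M
  have h2 := hBS.mul_mul_conjTranspose_same M
  rw [Matrix.conjTranspose_eq_transpose_of_trivial] at h1 h2
  refine ⟨?_, ?_⟩
  · rw [hK]
    exact (Matrix.PosSemidef.one.smul hσ0).add h1
  · have h3 := (hQ.smul (sub_nonneg.2 hσ1)).add h2
    convert h3 using 1
    rw [hK, Matrix.mul_sub, Matrix.sub_mul, Matrix.mul_smul, Matrix.smul_mul]
    module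
end

section
/- Let L = α·I_N + M A Mᵀ with M = Diag(√p)·Φ, where α ≥ 0 and A ∈ ℝ^{V×V} is symmetric positive definite. Then I_N + L is invertible and the marginal kernel K := I_N − (I_N + L)⁻¹ equals σ·I_N + M B Mᵀ, where σ = α/(α+1) and B = (α+1)⁻² · (A⁻¹ + (α+1)⁻¹·Σ)⁻¹. -/
open Matrix

/-- For `L = α•I + M A Mᵀ` with `α ≥ 0` and `A ≻ 0` symmetric,
`I + L` is invertible and `K = I - (I+L)⁻¹ = σ•I + M B Mᵀ` with
`σ = α/(α+1)` and `B = (α+1)⁻² (A⁻¹ + (α+1)⁻¹ Σ)⁻¹`. -/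
theorem stmt1 {ι : Type*} [Fintype ι] [DecidableEq ι] {V : ℕ}
    (Φ : Matrix ι (Fin V) ℝ) (p : ι → ℝ) (hp : ∀ x, 0 ≤ p x)
    (M : Matrix ι (Fin V) ℝ)
    (hM : M = Matrix.diagonal (fun x => Real.sqrt (p x)) * Φ)
    (S : Matrix (Fin V) (Fin V) ℝ) (hS : S = Φᵀ * Matrix.diagonal p * Φ)
    (α : ℝ) (hα : 0 ≤ α)
    (A : Matrix (Fin V) (Fin V) ℝ) (hA : A.PosDef)
    (L : Matrix ι ι ℝ) (hL : L = α • (1 : Matrix ι ι ℝ) + M * A * Mᵀ) :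
    IsUnit ((1 : Matrix ι ι ℝ) + L) ∧
      (1 : Matrix ι ι ℝ) - ((1 : Matrix ι ι ℝ) + L)⁻¹ =
        (α / (α + 1)) • (1 : Matrix ι ι ℝ) +
          M * (((α + 1) ^ 2)⁻¹ • (A⁻¹ + (α + 1)⁻¹ • S)⁻¹) * Mᵀ := by
  have hc : 0 < α + 1 := by linarith
  have hc0 : α + 1 ≠ 0 := hc.ne'
  have hMM : Mᵀ * M = S := by
    have hd : Matrix.diagonal (fun x => Real.sqrt (p x)) *
        Matrix.diagonal (fun x => Real.sqrt (p x)) = Matrix.diagonal p := by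
      rw [Matrix.diagonal_mul_diagonal]
      congr 1
      funext x
      exact Real.mul_self_sqrt (hp x)
    rw [hM, hS, Matrix.transpose_mul, Matrix.diagonal_transpose, ← hd]
    simp only [Matrix.mul_assoc]
  have hSpsd : S.PosSemidef := by
    rw [← hMM, ← Matrix.conjTranspose_eq_transpose_of_trivial]
    exact Matrix.posSemidef_conjTranspose_mul_self M
  have h1 : (1 : Matrix ι ι ℝ) + L = (α + 1) • (1 : Matrix ι ι ℝ) + M * A * Mᵀ := by
    rw [hL, add_smul, one_smul]
    abel
  have hpd1 : ((α + 1) • (1 : Matrix ι ι ℝ)).PosDef := Matrix.PosDef.one.smul hc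
  have hpsd2 : (M * A * Mᵀ).PosSemidef := by
    rw [← Matrix.conjTranspose_eq_transpose_of_trivial]
    exact hA.posSemidef.mul_mul_conjTranspose_same M
  have hinv : ((α + 1) • (1 : Matrix ι ι ℝ))⁻¹ = (α + 1)⁻¹ • (1 : Matrix ι ι ℝ) := by
    apply Matrix.inv_eq_right_inv
    simp [smul_smul, hc0]
  have hVU : Mᵀ * ((α + 1) • (1 : Matrix ι ι ℝ))⁻¹ * M = (α + 1)⁻¹ • S := by
    rw [hinv]
    simp [hMM]
  have hX : (A⁻¹ + (α + 1)⁻¹ • S).PosDef :=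
    hA.inv.add_posSemidef (hSpsd.smul (inv_nonneg.mpr hc.le))
  refine ⟨?_, ?_⟩
  · rw [h1]
    exact (hpd1.add_posSemidef hpsd2).isUnit
  · rw [h1, Matrix.add_mul_mul_inv_eq_sub _ _ _ _ hpd1.isUnit hA.isUnit (hVU ▸ hX.isUnit),
      hVU, hinv]
    have e : α / (α + 1) = 1 - (α + 1)⁻¹ := by field_simp; ring
    rw [e, sub_smul, one_smul]
    simp only [Matrix.smul_mul, Matrix.mul_smul, Matrix.one_mul, Matrix.mul_one, smul_smul]
    rw [pow_two, mul_inv]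
    abel
end

section
/- Let K = σ·I_N + M B Mᵀ with M = Diag(√p)·Φ, where σ ∈ [0,1), B ∈ ℝ^{V×V} is symmetric positive definite, and B⁻¹ − (1−σ)⁻¹·Σ is positive definite (Σ = Φᵀ Diag(p) Φ). Then I_N − K is invertible and the L-ensemble L := K·(I_N − K)⁻¹ equals α·I_N + M A Mᵀ, where α = σ/(1−σ) and A = (1−σ)⁻² · (B⁻¹ − (1−σ)⁻¹·Σ)⁻¹. -/
open Matrix

/-- For `K = σ•I + M B Mᵀ` with `σ ∈ [0,1)`, `B ≻ 0` and
`B⁻¹ - (1-σ)⁻¹ Σ ≻ 0`, the matrix `I - K` is invertible and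
`L = K (I - K)⁻¹ = α•I + M A Mᵀ` with `α = σ/(1-σ)` and
`A = (1-σ)⁻² (B⁻¹ - (1-σ)⁻¹ Σ)⁻¹`. -/
theorem stmt3 {ι : Type*} [Fintype ι] [DecidableEq ι] {V : ℕ}
    (Φ : Matrix ι (Fin V) ℝ) (p : ι → ℝ) (hp : ∀ x, 0 ≤ p x)
    (M : Matrix ι (Fin V) ℝ)
    (hM : M = Matrix.diagonal (fun x => Real.sqrt (p x)) * Φ)
    (S : Matrix (Fin V) (Fin V) ℝ) (hS : S = Φᵀ * Matrix.diagonal p * Φ)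
    (σ : ℝ) (hσ0 : 0 ≤ σ) (hσ1 : σ < 1)
    (B : Matrix (Fin V) (Fin V) ℝ) (hB : B.PosDef)
    (hBS : (B⁻¹ - (1 - σ)⁻¹ • S).PosDef)
    (K : Matrix ι ι ℝ) (hK : K = σ • (1 : Matrix ι ι ℝ) + M * B * Mᵀ) :
    IsUnit ((1 : Matrix ι ι ℝ) - K) ∧
      K * ((1 : Matrix ι ι ℝ) - K)⁻¹ =
        (σ / (1 - σ)) • (1 : Matrix ι ι ℝ) +
          M * (((1 - σ) ^ 2)⁻¹ • (B⁻¹ - (1 - σ)⁻¹ • S)⁻¹) * Mᵀ := by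
  have hs : (1 - σ) ≠ 0 := by linarith
  have hMS : Mᵀ * M = S := by
    rw [hM, hS, Matrix.transpose_mul, Matrix.diagonal_transpose]
    have hd : Matrix.diagonal (fun x => Real.sqrt (p x)) *
        Matrix.diagonal (fun x => Real.sqrt (p x)) = Matrix.diagonal p := by
      rw [Matrix.diagonal_mul_diagonal]
      congr 1
      funext x
      exact Real.mul_self_sqrt (hp x)
    rw [← hd]
    simp only [Matrix.mul_assoc]
  have hBB : B * B⁻¹ = 1 := Matrix.mul_nonsing_inv B ((Matrix.isUnit_iff_isUnit_det B).1 hB.isUnit)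
  have hDC := Matrix.mul_nonsing_inv _ ((Matrix.isUnit_iff_isUnit_det _).1 hBS.isUnit)
  set C := (B⁻¹ - (1 - σ)⁻¹ • S)⁻¹ with hC
  have key : C - (1 - σ)⁻¹ • (B * S * C) = B := by
    have h : B * ((B⁻¹ - (1 - σ)⁻¹ • S) * C) = B := by rw [hDC, Matrix.mul_one]
    rw [← Matrix.mul_assoc, Matrix.mul_sub, hBB, Matrix.sub_mul, Matrix.one_mul,
      Matrix.mul_smul, Matrix.smul_mul] at h
    exact h
  have hprod : M * B * Mᵀ * (M * C * Mᵀ) = M * (B * S * C) * Mᵀ := by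
    rw [← hMS]
    simp only [Matrix.mul_assoc]
  have key2 : M * C * Mᵀ - (1 - σ)⁻¹ • (M * B * Mᵀ * (M * C * Mᵀ)) = M * B * Mᵀ := by
    rw [hprod]
    conv_rhs => rw [← key]
    rw [Matrix.mul_sub, Matrix.sub_mul, Matrix.mul_smul, Matrix.smul_mul]
  have hK1 : (1 : Matrix ι ι ℝ) - K = (1 - σ) • (1 : Matrix ι ι ℝ) - M * B * Mᵀ := by
    rw [hK, sub_smul, one_smul]
    abel
  have hX : ((1 : Matrix ι ι ℝ) - K) *
      ((1 - σ)⁻¹ • (1 : Matrix ι ι ℝ) + ((1 - σ) ^ 2)⁻¹ • (M * C * Mᵀ)) = 1 := by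
    rw [hK1]
    generalize M * C * Mᵀ = Y at *
    generalize M * B * Mᵀ = Z at *
    have e : Z * Y = (1 - σ) • (Y - Z) := by
      rw [← key2, sub_sub_cancel, smul_smul, mul_inv_cancel₀ hs, one_smul, key2]
    simp only [Matrix.sub_mul, Matrix.mul_add, Matrix.smul_mul, Matrix.mul_smul,
      Matrix.one_mul, Matrix.mul_one, e]
    ext i j
    simp only [Matrix.sub_apply, Matrix.add_apply, Matrix.smul_apply, smul_eq_mul]
    field_simp
    ring
  refine ⟨IsUnit.of_mul_eq_one _ hX, ?_⟩
  rw [Matrix.inv_eq_right_inv hX]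
  have h2 : ∀ X : Matrix ι ι ℝ, (1 - K) * X = 1 → K * X = X - 1 := by
    intro X h
    rw [← h, Matrix.sub_mul, Matrix.one_mul, sub_sub_cancel]
  rw [h2 _ hX, Matrix.mul_smul, Matrix.smul_mul]
  ext i j
  simp only [Matrix.sub_apply, Matrix.add_apply, Matrix.smul_apply, smul_eq_mul]
  field_simp
  ring
end

section
/- Suppose the feature columns are orthonormal with respect to the weights p, i.e., Φᵀ Diag(p) Φ = I_V. Then for L = M·Diag(a)·Mᵀ with M = Diag(√p)·Φ and a ∈ ℝ^V, one has det(L + I_N) = ∏_{i=1}^{V} (a_i + 1). -/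
open Matrix

/-- If `Φᵀ Diag(p) Φ = I` then for `L = M Diag(a) Mᵀ`,
`det(L + I) = ∏ i, (a i + 1)`. -/
theorem stmt5 {ι : Type*} [Fintype ι] [DecidableEq ι] {V : ℕ}
    (Φ : Matrix ι (Fin V) ℝ) (p : ι → ℝ) (hp : ∀ x, 0 ≤ p x)
    (M : Matrix ι (Fin V) ℝ)
    (hM : M = Matrix.diagonal (fun x => Real.sqrt (p x)) * Φ)
    (horth : Φᵀ * Matrix.diagonal p * Φ = (1 : Matrix (Fin V) (Fin V) ℝ))
    (a : Fin V → ℝ)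
    (L : Matrix ι ι ℝ) (hL : L = M * Matrix.diagonal a * Mᵀ) :
    (L + 1).det = ∏ i : Fin V, (a i + 1) := by
  have hMM : Mᵀ * M = 1 := by
    have hd : Matrix.diagonal (fun x => Real.sqrt (p x)) *
        Matrix.diagonal (fun x => Real.sqrt (p x)) = Matrix.diagonal p := by
      rw [Matrix.diagonal_mul_diagonal]
      congr 1
      funext x
      exact Real.mul_self_sqrt (hp x)
    rw [hM, Matrix.transpose_mul, Matrix.diagonal_transpose, Matrix.mul_assoc,
      ← Matrix.mul_assoc (Matrix.diagonal _) (Matrix.diagonal _) Φ, hd, ← Matrix.mul_assoc, horth]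
  rw [hL, Matrix.mul_assoc, Matrix.det_mul_add_one_comm, Matrix.mul_assoc, hMM, Matrix.mul_one,
    ← Matrix.diagonal_one, Matrix.diagonal_add, Matrix.det_diagonal]
end

section
/- Suppose the number of items is N = 2^V and the second-moment matrix factorizes as Σ = Φᵀ Diag(p) Φ = Diag(ν) + μ·μᵀ for some ν, μ ∈ ℝ^V. Let L = α·I_N + M A Mᵀ with M = Diag(√p)·Φ, α ≥ 0, and A ∈ ℝ^{V×V} symmetric positive definite, and let K = I_N − (I_N + L)⁻¹. Then trace(K) = (α/(α+1))·2^V + (α+1)⁻²·trace[(Diag(ν) + μμᵀ)·((α+1)⁻¹·(Diag(ν) + μμᵀ) + A⁻¹)⁻¹]. -/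
open Matrix

/-- with `N = 2^V`, `Σ = Diag(ν) + μμᵀ`, `L = α•I + M A Mᵀ`
(`α ≥ 0`, `A ≻ 0`) and `K = I - (I+L)⁻¹`, one has
`tr K = (α/(α+1)) 2^V + (α+1)⁻² tr[(Diag(ν)+μμᵀ)((α+1)⁻¹(Diag(ν)+μμᵀ)+A⁻¹)⁻¹]`. -/
theorem stmt10 {ι : Type*} [Fintype ι] [DecidableEq ι] {V : ℕ}
    (hcard : Fintype.card ι = 2 ^ V)
    (Φ : Matrix ι (Fin V) ℝ) (p : ι → ℝ) (hp : ∀ x, 0 ≤ p x)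
    (M : Matrix ι (Fin V) ℝ)
    (hM : M = Matrix.diagonal (fun x => Real.sqrt (p x)) * Φ)
    (ν μ : Fin V → ℝ)
    (hS : Φᵀ * Matrix.diagonal p * Φ = Matrix.diagonal ν + Matrix.vecMulVec μ μ)
    (α : ℝ) (hα : 0 ≤ α)
    (A : Matrix (Fin V) (Fin V) ℝ) (hA : A.PosDef)
    (L : Matrix ι ι ℝ) (hL : L = α • (1 : Matrix ι ι ℝ) + M * A * Mᵀ)
    (K : Matrix ι ι ℝ) (hK : K = (1 : Matrix ι ι ℝ) - ((1 : Matrix ι ι ℝ) + L)⁻¹) :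
    K.trace = (α / (α + 1)) * 2 ^ V
      + ((α + 1) ^ 2)⁻¹ *
          ((Matrix.diagonal ν + Matrix.vecMulVec μ μ)
            * ((α + 1)⁻¹ • (Matrix.diagonal ν + Matrix.vecMulVec μ μ) + A⁻¹)⁻¹).trace := by
  have hc : 0 < α + 1 := by linarith
  have hMM : Mᵀ * M = Matrix.diagonal ν + Matrix.vecMulVec μ μ := by
    rw [← hS, hM, Matrix.transpose_mul, Matrix.diagonal_transpose, Matrix.mul_assoc,
      Matrix.mul_assoc, ← Matrix.mul_assoc (Matrix.diagonal _) (Matrix.diagonal _) Φ,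
      Matrix.diagonal_mul_diagonal]
    congr 3
    funext x
    exact Real.mul_self_sqrt (hp x)
  rw [← hMM]
  have hone : ((α + 1) • (1 : Matrix ι ι ℝ)) * ((α + 1)⁻¹ • (1 : Matrix ι ι ℝ)) = 1 := by
    rw [Matrix.smul_mul, Matrix.mul_smul, smul_smul, mul_inv_cancel₀ hc.ne', one_smul,
      Matrix.mul_one]
  have hinv : ((α + 1) • (1 : Matrix ι ι ℝ))⁻¹ = (α + 1)⁻¹ • (1 : Matrix ι ι ℝ) :=
    Matrix.inv_eq_right_inv hone
  have hU : IsUnit ((α + 1) • (1 : Matrix ι ι ℝ)) := by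
    rw [Matrix.isUnit_iff_isUnit_det]
    exact Matrix.isUnit_det_of_right_inverse hone
  have hmid : Mᵀ * ((α + 1)⁻¹ • (1 : Matrix ι ι ℝ)) * M = (α + 1)⁻¹ • (Mᵀ * M) := by
    rw [Matrix.mul_smul, Matrix.mul_one, Matrix.smul_mul]
  have hpsd : (Mᵀ * M).PosSemidef := by
    have := Matrix.posSemidef_conjTranspose_mul_self M
    rwa [Matrix.conjTranspose_eq_transpose_of_trivial] at this
  have hpd : (A⁻¹ + (α + 1)⁻¹ • (Mᵀ * M)).PosDef :=
    hA.inv.add_posSemidef (hpsd.smul (inv_nonneg.mpr hc.le))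
  have hW := Matrix.add_mul_mul_inv_eq_sub ((α + 1) • (1 : Matrix ι ι ℝ)) M A Mᵀ hU hA.isUnit
    (by rw [hinv, hmid]; exact hpd.isUnit)
  rw [hinv, hmid] at hW
  have hL1 : 1 + L = (α + 1) • (1 : Matrix ι ι ℝ) + M * A * Mᵀ := by
    rw [hL, add_smul, one_smul]; abel
  rw [hK, hL1, hW, add_comm A⁻¹]
  generalize ((α + 1)⁻¹ • (Mᵀ * M) + A⁻¹)⁻¹ = X
  have ht : (M * X * Mᵀ).trace = (Mᵀ * M * X).trace := by
    rw [Matrix.trace_mul_comm, Matrix.mul_assoc]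
  simp only [Matrix.smul_mul, Matrix.mul_smul, Matrix.one_mul, Matrix.mul_one, Matrix.trace_sub,
    Matrix.trace_smul, Matrix.trace_one, hcard, ht, smul_eq_mul]
  push_cast
  field_simp
  ring
end

section
/- Let A ∈ ℝ^{V×V} be symmetric positive definite, ρ > 0, ν ∈ ℝ^V with ν_k > 0 for all k, and μ ∈ ℝ^V. Then det(A⁻¹ + ρ·Diag(ν) + ρ·μμᵀ) = [1 + μᵀ·(Diag(1/ν) − Diag(1/ν)·(ρ·A + Diag(1/ν))⁻¹·Diag(1/ν))·μ] · det(A⁻¹ + ρ·Diag(ν)). -/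
open Matrix

/-- matrix determinant lemma step:
`det(A⁻¹ + ρ Diag(ν) + ρ μμᵀ)
  = [1 + μᵀ(Diag(1/ν) - Diag(1/ν)(ρA + Diag(1/ν))⁻¹ Diag(1/ν))μ] det(A⁻¹ + ρ Diag(ν))`. -/
theorem stmt11 {V : ℕ}
    (A : Matrix (Fin V) (Fin V) ℝ) (hA : A.PosDef)
    (ρ : ℝ) (hρ : 0 < ρ)
    (ν : Fin V → ℝ) (hν : ∀ k, 0 < ν k) (μ : Fin V → ℝ) :
    (A⁻¹ + ρ • Matrix.diagonal ν + ρ • Matrix.vecMulVec μ μ).det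
      = (1 + μ ⬝ᵥ ((Matrix.diagonal (fun k => (ν k)⁻¹)
            - Matrix.diagonal (fun k => (ν k)⁻¹)
              * (ρ • A + Matrix.diagonal (fun k => (ν k)⁻¹))⁻¹
              * Matrix.diagonal (fun k => (ν k)⁻¹)) *ᵥ μ))
          * (A⁻¹ + ρ • Matrix.diagonal ν).det := by
  set D : Matrix (Fin V) (Fin V) ℝ := Matrix.diagonal (fun k => (ν k)⁻¹) with hD
  have hDpos : D.PosDef := Matrix.PosDef.diagonal (fun k => inv_pos.mpr (hν k))
  have hS : (ρ • A + D).PosDef := (hA.smul hρ).add hDpos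
  have hSu : IsUnit (ρ • A + D).det := hS.det_pos.ne'.isUnit
  have hAu : IsUnit A.det := hA.det_pos.ne'.isUnit
  have hND : Matrix.diagonal ν * D = 1 := by
    rw [hD, Matrix.diagonal_mul_diagonal, ← Matrix.diagonal_one]
    congr 1
    funext k
    exact mul_inv_cancel₀ (hν k).ne'
  have hMD : (A⁻¹ + ρ • Matrix.diagonal ν) * D = A⁻¹ * (ρ • A + D) := by
    rw [Matrix.add_mul, Matrix.mul_add, Matrix.smul_mul, hND, Matrix.mul_smul,
      Matrix.nonsing_inv_mul _ hAu, add_comm]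
  have hMK : (A⁻¹ + ρ • Matrix.diagonal ν) * (D - D * (ρ • A + D)⁻¹ * D)
      = ρ • (1 : Matrix (Fin V) (Fin V) ℝ) := by
    rw [Matrix.mul_sub, ← Matrix.mul_assoc, ← Matrix.mul_assoc, hMD,
      Matrix.mul_assoc A⁻¹, Matrix.mul_nonsing_inv _ hSu, Matrix.mul_one, Matrix.mul_add,
      Matrix.mul_smul, Matrix.nonsing_inv_mul _ hAu, add_sub_cancel_right]
  generalize D - D * (ρ • A + D)⁻¹ * D = K at hMK ⊢
  generalize A⁻¹ + ρ • Matrix.diagonal ν = M at hMK ⊢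
  have h : M + ρ • Matrix.vecMulVec μ μ
      = M * (1 + replicateCol Unit (K *ᵥ μ) * replicateRow Unit μ) := by
    rw [← Matrix.vecMulVec_eq, ← Matrix.mul_vecMulVec, Matrix.mul_add, Matrix.mul_one,
      ← Matrix.mul_assoc, hMK, Matrix.smul_mul, Matrix.one_mul]
  rw [h, Matrix.det_mul, det_one_add_replicateCol_mul_replicateRow, mul_comm]
end

section
/- Let A = γ·I_V + U·Diag(θ)·Uᵀ with γ > 0, θ ∈ ℝ^r with θ_k > 0 for all k, U ∈ ℝ^{V×r}, and let ρ > 0 and ν ∈ ℝ^V with ν_k > 0 for all k. Then det(A⁻¹ + ρ·Diag(ν)) · det(Diag(γ/θ) + UᵀU) = det(Diag(γ/θ) + Uᵀ·Diag(νγρ/(1+νγρ))·U) · det((1/γ)·I_V + ρ·Diag(ν)), where νγρ/(1+νγρ) is the vector with entries ν_kγρ/(1+ν_kγρ) and γ/θ has entries γ/θ_k. -/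
open Matrix

lemma aux13 {V r : ℕ} (γ : ℝ) (hγ : 0 < γ)
    (θ : Fin r → ℝ) (hθ : ∀ k, 0 < θ k)
    (U : Matrix (Fin V) (Fin r) ℝ) (W : Matrix (Fin V) (Fin V) ℝ) :
    (Matrix.diagonal (fun k => γ / θ k) + Uᵀ * W * U).det
      = (Matrix.diagonal (fun k => γ / θ k)).det
        * (1 + W * (γ⁻¹ • (U * Matrix.diagonal θ * Uᵀ))).det := by
  have h1 : Matrix.diagonal (fun k => γ / θ k) * (γ⁻¹ • Matrix.diagonal θ) = 1 := by
    rw [Matrix.mul_smul, Matrix.diagonal_mul_diagonal, ← Matrix.diagonal_smul,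
      ← Matrix.diagonal_one]
    congr 1
    funext k
    have := (hθ k).ne'
    simp only [Pi.smul_apply, smul_eq_mul]
    field_simp
  have h2 : Matrix.diagonal (fun k => γ / θ k) + Uᵀ * W * U
      = Matrix.diagonal (fun k => γ / θ k)
        * (1 + ((γ⁻¹ • Matrix.diagonal θ) * Uᵀ) * (W * U)) := by
    rw [Matrix.mul_add, Matrix.mul_one, ← Matrix.mul_assoc, ← Matrix.mul_assoc,
      ← Matrix.mul_assoc, h1, Matrix.one_mul]
  rw [h2, Matrix.det_mul, Matrix.det_one_add_mul_comm]
  simp only [Matrix.mul_smul, Matrix.smul_mul, Matrix.mul_assoc]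

/-- determinant identity for `A = γI + U Diag(θ) Uᵀ`:
`det(A⁻¹ + ρ Diag(ν)) det(Diag(γ/θ) + UᵀU)
  = det(Diag(γ/θ) + Uᵀ Diag(νγρ/(1+νγρ)) U) det((1/γ)I + ρ Diag(ν))`. -/
theorem stmt13 {V r : ℕ}
    (γ : ℝ) (hγ : 0 < γ)
    (θ : Fin r → ℝ) (hθ : ∀ k, 0 < θ k)
    (U : Matrix (Fin V) (Fin r) ℝ)
    (ρ : ℝ) (hρ : 0 < ρ)
    (ν : Fin V → ℝ) (hν : ∀ k, 0 < ν k)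
    (A : Matrix (Fin V) (Fin V) ℝ)
    (hA : A = γ • (1 : Matrix (Fin V) (Fin V) ℝ) + U * Matrix.diagonal θ * Uᵀ) :
    (A⁻¹ + ρ • Matrix.diagonal ν).det
        * (Matrix.diagonal (fun k => γ / θ k) + Uᵀ * U).det
      = (Matrix.diagonal (fun k => γ / θ k)
            + Uᵀ * Matrix.diagonal (fun k => ν k * γ * ρ / (1 + ν k * γ * ρ)) * U).det
          * (γ⁻¹ • (1 : Matrix (Fin V) (Fin V) ℝ) + ρ • Matrix.diagonal ν).det := by
  have hpd : A.PosDef := by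
    rw [hA]
    refine Matrix.PosDef.add_posSemidef (Matrix.PosDef.one.smul hγ) ?_
    have h := (Matrix.PosSemidef.diagonal (fun k => (hθ k).le : 0 ≤ θ)).mul_mul_conjTranspose_same U
    simpa using h
  have hu : IsUnit A.det := hpd.det_pos.ne'.isUnit
  have e1 := aux13 γ hγ θ hθ U 1
  rw [Matrix.mul_one, Matrix.one_mul] at e1
  rw [e1, aux13 γ hγ θ hθ U]
  set S := U * Matrix.diagonal θ * Uᵀ with hS
  set W := Matrix.diagonal (fun k => ν k * γ * ρ / (1 + ν k * γ * ρ)) with hW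
  have hA' : (1 : Matrix (Fin V) (Fin V) ℝ) + γ⁻¹ • S = γ⁻¹ • A := by
    rw [hA, smul_add, smul_smul, inv_mul_cancel₀ hγ.ne', one_smul]
  have hw : (γ⁻¹ • (1 : Matrix (Fin V) (Fin V) ℝ) + ρ • Matrix.diagonal ν) * W
      = ρ • Matrix.diagonal ν := by
    rw [hW, ← Matrix.diagonal_one, ← Matrix.diagonal_smul, ← Matrix.diagonal_smul,
      Matrix.diagonal_add, Matrix.diagonal_mul_diagonal]
    congr 1
    funext k
    have : 0 < 1 + ν k * γ * ρ := by have := hν k; positivity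
    simp only [Pi.smul_apply, smul_eq_mul]
    have h3 : 1 + γ * ρ * ν k ≠ 0 := by
      have := hν k
      positivity
    field_simp
  have key : (A⁻¹ + ρ • Matrix.diagonal ν) * (1 + γ⁻¹ • S)
      = (γ⁻¹ • (1 : Matrix (Fin V) (Fin V) ℝ) + ρ • Matrix.diagonal ν) * (1 + W * (γ⁻¹ • S)) := by
    rw [Matrix.mul_add _ 1 (W * _), ← Matrix.mul_assoc, hw, Matrix.add_mul, hA',
      Matrix.mul_smul A⁻¹, Matrix.nonsing_inv_mul _ hu, ← hA', Matrix.mul_add, Matrix.mul_one,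
      Matrix.mul_one, add_assoc]
  have hd := congrArg Matrix.det key
  rw [Matrix.det_mul, Matrix.det_mul] at hd
  linear_combination (Matrix.diagonal (fun k => γ / θ k)).det * hd
end
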